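/- Let f(x) = x². In the root q-Jaco graph J_∞(x²), the out-degrees of consecutive vertices are never equal: d⁺(v_i) ≠ d⁺(v_{i+1}) for every i ∈ ℕ, where d⁺(v_i) = f(i) − d⁻(v_i) = i² − d⁻(v_i). -/

import Mathlib

/-- In-degree of vertex `v_j` in the (root) Jaco graph with incidence function `f`:
`d⁻(v_j) = |{ i : 1 ≤ i < j, i + f i − d⁻(v_i) ≥ j }|`. -/
noncomputable def jacoIn (f : ℕ → ℕ) (j : ℕ) : ℕ :=
  Nat.strongRecOn j (fun j ih =>
    (((Finset.Ico 1 j).attach).filter (fun i : {x // x ∈ Finset.Ico 1 j} =>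
      j ≤ i.1 + f i.1 - ih i.1 (Finset.mem_Ico.mp i.2).2)).card)

/-- The arc `(v_i, v_j)` is present in the Jaco graph iff `1 ≤ i < j` and
`i + f i − d⁻(v_i) ≥ j`. -/
def jacoArc (f : ℕ → ℕ) (i j : ℕ) : Prop :=
  1 ≤ i ∧ i < j ∧ j ≤ i + f i - jacoIn f i

noncomputable instance (f : ℕ → ℕ) (i j : ℕ) : Decidable (jacoArc f i j) := by
  unfold jacoArc; infer_instance

/-- The underlying undirected simple graph `J*_n(f)` of the finite Jaco graph `J_n(f)`,
on vertex set `{v_1, …, v_n}` (vertex `x : Fin n` represents `v_{x+1}`). -/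
def jacoGraph (f : ℕ → ℕ) (n : ℕ) : SimpleGraph (Fin n) :=
  SimpleGraph.fromRel (fun x y => jacoArc f (x.1 + 1) (y.1 + 1))

noncomputable instance (f : ℕ → ℕ) (n : ℕ) : DecidableRel (jacoGraph f n).Adj := fun x y =>
  decidable_of_iff
    (x ≠ y ∧ (jacoArc f (x.1 + 1) (y.1 + 1) ∨ jacoArc f (y.1 + 1) (x.1 + 1)))
    (by unfold jacoGraph; exact (SimpleGraph.fromRel_adj (fun a b : Fin n => jacoArc f (a.1 + 1) (b.1 + 1)) x y).symm)

theorem jacoIn_unfold (f : ℕ → ℕ) (j : ℕ) :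
    jacoIn f j = ((Finset.Ico 1 j).filter (fun i => j ≤ i + f i - jacoIn f i)).card := by
  have h : jacoIn f j = (((Finset.Ico 1 j).attach).filter
      (fun i : {x // x ∈ Finset.Ico 1 j} => j ≤ i.1 + f i.1 - jacoIn f i.1)).card := by
    conv_lhs => unfold jacoIn
    rw [Nat.strongRecOn_eq]
    rfl
  rw [h, Finset.filter_attach (fun i => j ≤ i + f i - jacoIn f i)]
  simp

theorem jacoIn_le (f : ℕ → ℕ) (j : ℕ) : jacoIn f j ≤ j - 1 := by
  rw [jacoIn_unfold]
  exact (Finset.card_filter_le _ _).trans (by simp)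

theorem jacoIn_succ_le (f : ℕ → ℕ) (j : ℕ) : jacoIn f (j + 1) ≤ jacoIn f j + 1 := by
  rw [jacoIn_unfold f (j + 1), jacoIn_unfold f j]
  refine (Finset.card_le_card (t := insert j ((Finset.Ico 1 j).filter
    (fun i => j ≤ i + f i - jacoIn f i))) ?_).trans (Finset.card_insert_le _ _)
  intro x hx
  simp only [Finset.mem_filter, Finset.mem_Ico, Finset.mem_insert] at hx ⊢
  omega

/-- For `f(x) = x²`, in the root q-Jaco graph `J_∞(x²)` the
out-degrees `d⁺(v_i) = i² − d⁻(v_i)` of consecutive vertices are never equal. -/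
theorem qJaco_sq_outdegrees_distinct (i : ℕ) (hi : 1 ≤ i) :
    i ^ 2 - jacoIn (fun x => x ^ 2) i ≠
      (i + 1) ^ 2 - jacoIn (fun x => x ^ 2) (i + 1) := by
  have h1 := jacoIn_le (fun x => x ^ 2) i
  have h2 := jacoIn_succ_le (fun x => x ^ 2) i
  have h3 : (i + 1) ^ 2 = i ^ 2 + 2 * i + 1 := by ring
  have h4 : i ≤ i ^ 2 := Nat.le_self_pow (by norm_num) i
  omega
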